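/- There exists a constant c₁ ∈ (0,1) depending only on the dimension n such that the following holds for every σ ∈ (0, 1/4] and τ > 0. Let U be a continuous function on the closure of Q₁ = B₁(0)×(−1,1) ⊂ ℝⁿ×ℝ which is subcaloric in Q₁, i.e. ∫_{Q₁} U (Δφ + ∂ₜφ) ≥ 0 for every nonnegative φ ∈ C_c^∞(Q₁), and which satisfies U ≤ τ on the parabolic boundary ∂'Q₁ = (B₁(0)×{−1}) ∪ (∂B₁(0)×(−1,1)) and U ≤ 0 on ∂'Q₁ ∩ {x_n > σ}. Then U ≤ (1 − c₁)τ in Q_{1/2} = B_{1/2}(0)×(−1/4, 1/4). -/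

import Mathlib

open MeasureTheory Metric Set Filter Topology
open scoped RealInnerProductSpace

noncomputable section

abbrev Spc (m : ℕ) := EuclideanSpace ℝ (Fin m)
abbrev SpT (m : ℕ) := Spc m × ℝ

namespace ParabolicBernoulli

/-- The `i`-th spatial unit vector. -/
def sUnit (m : ℕ) (i : Fin m) : Spc m := EuclideanSpace.single i 1

/-- Spatial directional derivative of `u` in direction `v`. -/
def sDeriv {m : ℕ} (u : SpT m → ℝ) (v : Spc m) (p : SpT m) : ℝ :=
  fderiv ℝ u p (v, 0)

/-- Time derivative of `u`. -/
def tDeriv {m : ℕ} (u : SpT m → ℝ) (p : SpT m) : ℝ :=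
  fderiv ℝ u p (0, 1)

/-- Spatial gradient of `u`. -/
def sGrad {m : ℕ} (u : SpT m → ℝ) (p : SpT m) : Spc m :=
  (EuclideanSpace.equiv (Fin m) ℝ).symm (fun i => sDeriv u (sUnit m i) p)

/-- Spatial Laplacian of `u`. -/
def sLap {m : ℕ} (u : SpT m → ℝ) (p : SpT m) : ℝ :=
  ∑ i : Fin m, sDeriv (sDeriv u (sUnit m i)) (sUnit m i) p

/-- Heat operator `Δu - ∂ₜ u`. -/
def heatOp {m : ℕ} (u : SpT m → ℝ) (p : SpT m) : ℝ := sLap u p - tDeriv u p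

/-- `u` is caloric on `D`: `C²` there and `Δu - ∂ₜu = 0`. -/
def IsCaloricOn {m : ℕ} (u : SpT m → ℝ) (D : Set (SpT m)) : Prop :=
  ContDiffOn ℝ 2 u D ∧ ∀ p ∈ D, heatOp u p = 0

/-- Parabolic cylinder `Q_r(x₀,t₀) = B_r(x₀) × (t₀ - r², t₀ + r²)`. -/
def Q {m : ℕ} (x₀ : Spc m) (t₀ r : ℝ) : Set (SpT m) :=
  {p | dist p.1 x₀ < r ∧ |p.2 - t₀| < r ^ 2}

/-- Negative parabolic cylinder `Q_r⁻(x₀,t₀) = B_r(x₀) × (t₀ - r², t₀)`. -/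
def Qneg {m : ℕ} (x₀ : Spc m) (t₀ r : ℝ) : Set (SpT m) :=
  {p | dist p.1 x₀ < r ∧ t₀ - r ^ 2 < p.2 ∧ p.2 < t₀}

/-- Positivity set `{u > 0}`. -/
def posSet {m : ℕ} (u : SpT m → ℝ) : Set (SpT m) := {p | 0 < u p}

/-- Parabolic distance from a point to a set. -/
def pardist {m : ℕ} (p : SpT m) (A : Set (SpT m)) : ℝ :=
  sInf ((fun q : SpT m => Real.sqrt (dist p.1 q.1 ^ 2 + |p.2 - q.2|)) '' A)

/-- Parabolic distance between two points. -/
def pardistPt {m : ℕ} (p q : SpT m) : ℝ := Real.sqrt (dist p.1 q.1 ^ 2 + |p.2 - q.2|)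

/-- The backward heat-type kernel `G_{(x₀,t₀)}`. -/
def Gkern {m : ℕ} (x₀ : Spc m) (t₀ : ℝ) (p : SpT m) : ℝ :=
  4 * Real.pi * (t₀ - p.2) * |4 * Real.pi * (t₀ - p.2)| ^ (-(m : ℝ) / 2 - 1) *
    Real.exp (-(dist p.1 x₀) ^ 2 / (4 * (t₀ - p.2)))

/-- Horizontal layer `T_r⁻(t₀) = ℝⁿ × (t₀ - 4r², t₀ - r²)`. -/
def Tlayer (m : ℕ) (t₀ r : ℝ) : Set (SpT m) := {p | t₀ - 4 * r ^ 2 < p.2 ∧ p.2 < t₀ - r ^ 2}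

/-- The Weiss-type monotonicity quantity `Ψ_{(x₀,t₀)}(r)`. -/
def Psi {m : ℕ} (u χ : SpT m → ℝ) (x₀ : Spc m) (t₀ r : ℝ) : ℝ :=
  r ^ (-2 : ℤ) * (∫ p in Tlayer m t₀ r, (‖sGrad u p‖ ^ 2 + χ p) * Gkern x₀ t₀ p) -
    (1 / 2) * r ^ (-2 : ℤ) * ∫ p in Tlayer m t₀ r, (t₀ - p.2)⁻¹ * u p ^ 2 * Gkern x₀ t₀ p

/-- Spatial divergence of a vector field. -/
def sDiv {m : ℕ} (ξ : SpT m → Spc m) (p : SpT m) : ℝ :=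
  ∑ i : Fin m, fderiv ℝ (fun q => ξ q i) p (sUnit m i, 0)

/-- Spatial Jacobian `Dξ` applied to a vector `v`. -/
def sJacApply {m : ℕ} (ξ : SpT m → Spc m) (v : Spc m) (p : SpT m) : Spc m :=
  (EuclideanSpace.equiv (Fin m) ℝ).symm (fun i => fderiv ℝ (fun q => ξ q i) p (v, 0))

/-- Integrand of the domain variation identity. -/
def dvIntegrand {m : ℕ} (u χ : SpT m → ℝ) (ξ : SpT m → Spc m) (p : SpT m) : ℝ :=
  -2 * tDeriv u p * ⟪sGrad u p, ξ p⟫ +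
    (‖sGrad u p‖ ^ 2 + χ p) * sDiv ξ p -
    2 * ⟪sGrad u p, sJacApply ξ (sGrad u p) p⟫

/-- A solution `(u,χ)` of the parabolic free boundary problem
`Δu - ∂ₜu = 0` in `{u>0}`, `|∇u| = 1` on `∂{u>0}`, in the sense of
Definition 6.1 of [Weiss, The parabolic Bernoulli problem]; space dimension `n+1`. -/
structure Solution (n : ℕ) (Ω : Set (SpT (n+1))) (u χ : SpT (n+1) → ℝ) : Prop where
  isOpen_dom : IsOpen Ω
  nonneg : ∀ p ∈ Ω, 0 ≤ u p
  contOn : ContinuousOn u Ω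
  gradContOn : ContinuousOn (sGrad u) Ω
  contDiffOn_pos : ContDiffOn ℝ 2 u (Ω ∩ posSet u)
  caloric_pos : ∀ p ∈ Ω ∩ posSet u, heatOp u p = 0
  chi_meas : Measurable χ
  chi_valued : ∀ᵐ p : SpT (n+1), p ∈ Ω → χ p = 0 ∨ χ p = 1
  chi_ge_ind : ∀ᵐ p : SpT (n+1), p ∈ Ω → 0 < u p → χ p = 1
  tderiv_bound : ∀ R : ℝ, 0 < R → ∃ C : ℝ, ∀ (x₀ : Spc (n+1)) (t₀ r : ℝ), 0 < r →
    Q x₀ t₀ r ⊆ Ω ∩ Q (0 : Spc (n+1)) 0 R →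
    (∫ p in Q x₀ t₀ r, tDeriv u p ^ 2) ≤ C * r ^ (n+1)
  monotonicity : ∀ (x₀ : Spc (n+1)) (t₀ ρ σ : ℝ), 0 < ρ → ρ < σ →
    {p : SpT (n+1) | t₀ - 4 * σ ^ 2 < p.2 ∧ p.2 < t₀} ⊆ Ω →
    Psi u χ x₀ t₀ ρ ≤ Psi u χ x₀ t₀ σ
  domain_variation : ∀ ξ : SpT (n+1) → Spc (n+1), (∃ K, LipschitzWith K ξ) →
    HasCompactSupport ξ → tsupport ξ ⊆ Ω →
    (∫ p in Ω, dvIntegrand u χ ξ p) = 0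
  halfplane : ∀ κ : ℝ, 0 < κ → ∃ δ : ℝ, 0 < δ ∧
    ∀ (x₀ : Spc (n+1)) (t₀ r θ : ℝ), 0 < r → Q x₀ t₀ r ⊆ Ω →
    (∀ q ∈ Q (0 : Spc (n+1)) 0 1,
      abs (u (x₀ + r • q.1, t₀ + r ^ 2 * q.2) / r - θ * |q.1 (Fin.last n)|) < δ) →
    θ < 1 + κ

/-- The flatness class `u ∈ F(σ₊,σ₋,τ)` in `Q_ρ(x₀,t₀)` in direction `ν`. -/
structure FlatnessClass (n : ℕ) (Ω : Set (SpT (n+1))) (u χ : SpT (n+1) → ℝ)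
    (σp σm τ : ℝ) (x₀ : Spc (n+1)) (t₀ ρ : ℝ) (ν : Spc (n+1)) : Prop where
  sol : Solution n Ω u χ
  cyl_subset : Q x₀ t₀ ρ ⊆ Ω
  unit : ‖ν‖ = 1
  fb_mem : (x₀, t₀ + ρ ^ 2) ∈ frontier (posSet u)
  u_zero : ∀ p ∈ Q x₀ t₀ ρ, σp * ρ ≤ ⟪p.1 - x₀, ν⟫ → u p = 0
  chi_zero : ∀ᵐ p : SpT (n+1), p ∈ Q x₀ t₀ ρ → σp * ρ ≤ ⟪p.1 - x₀, ν⟫ → χ p = 0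
  chi_one : ∀ᵐ p : SpT (n+1), p ∈ Q x₀ t₀ ρ → ⟪p.1 - x₀, ν⟫ ≤ -(σm * ρ) → χ p = 1
  u_lower : ∀ p ∈ Q x₀ t₀ ρ, ⟪p.1 - x₀, ν⟫ ≤ -(σm * ρ) →
    -(⟪p.1 - x₀, ν⟫ + σm * ρ) ≤ u p
  grad_le : ∀ p ∈ Q x₀ t₀ ρ, ‖sGrad u p‖ ≤ 1 + τ

end ParabolicBernoulli

namespace ParabolicBernoulli

/-- The parabolic boundary `∂'Q₁ = (B₁(0)×{-1}) ∪ (∂B₁(0)×(-1,1))` of `Q₁`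
(space dimension `n+1`). -/
def parBdryQ1 (n : ℕ) : Set (SpT (n+1)) :=
  {p : SpT (n+1) | dist p.1 0 < 1 ∧ p.2 = -1} ∪
    {p : SpT (n+1) | dist p.1 0 = 1 ∧ -1 < p.2 ∧ p.2 < 1}

/-!
Mollification turns a continuous distributional subsolution of the heat equation into smooth
subsolutions converging locally uniformly to it, so it is a viscosity subsolution and obeys the
comparison principle with `C²` supersolutions. The supersolution used here is `τ (1 - h)`, where
`h = e^{-α(q + 1)} - e^{-α(11/16 + 1)}` and `q = |x'|² - x_n + t²`. As `|∇q| ≥ 1`, `h` is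
subcaloric for large `α`. Since `q ≥ -1` on `Q₁`, while `q ≥ 11/16` on the part `x_n ≤ 1/4` of the
parabolic boundary and `q ≤ 9/16` on `Q_{1/2}`, the bound `U ≤ τ (1 - h)` holds on the parabolic
boundary and is a definite improvement of `U ≤ τ` on `Q_{1/2}`.
-/

section SecondDerivatives

theorem deriv_deriv_nonpos_of_isLocalMax {f : ℝ → ℝ} {a : ℝ} (h : IsLocalMax f a)
    (hf : ContinuousAt f a) : deriv (deriv f) a ≤ 0 := by
  by_contra! hpos
  have hmin : IsLocalMin f a := isLocalMin_of_deriv_deriv_pos hpos h.deriv_eq_zero hf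
  have hconst : f =ᶠ[𝓝 a] fun _ => f a := by
    filter_upwards [hmin, h] with s hge hle using le_antisymm hle hge
  simp [hconst.deriv.deriv_eq] at hpos

variable {E : Type*} [NormedAddCommGroup E] [NormedSpace ℝ E] {f g : E → ℝ} {x : E}

theorem contDiffAt_fderiv_apply {m k : WithTop ℕ∞} (hf : ContDiffAt ℝ k f x) (hmk : m + 1 ≤ k)
    (v : E) : ContDiffAt ℝ m (fun y => fderiv ℝ f y v) x :=
  (hf.fderiv_right hmk).clm_apply contDiffAt_const

theorem differentiableAt_fderiv_apply (hf : ContDiffAt ℝ 2 f x) (v : E) :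
    DifferentiableAt ℝ (fun y => fderiv ℝ f y v) x :=
  (contDiffAt_fderiv_apply (m := 1) hf (by norm_num) v).differentiableAt one_ne_zero

theorem eventually_differentiableAt_of_contDiffAt_two (hf : ContDiffAt ℝ 2 f x) :
    ∀ᶠ y in 𝓝 x, DifferentiableAt ℝ f y :=
  (hf.eventually (by simp)).mono fun _ hy => hy.differentiableAt two_ne_zero

theorem continuousAt_fderiv_fderiv_apply (hf : ContDiffAt ℝ 2 f x) (v w : E) :
    ContinuousAt (fun y => fderiv ℝ (fun z => fderiv ℝ f z v) y w) x :=
  (contDiffAt_fderiv_apply (contDiffAt_fderiv_apply (m := 1) hf (by norm_num) v)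
    (m := 0) (by norm_num) w).continuousAt

theorem fderiv_fderiv_apply_nonpos_of_isLocalMax (hf : ContDiffAt ℝ 2 f x) {v : E}
    (h : IsLocalMax (fun s : ℝ => f (x + s • v)) 0) :
    fderiv ℝ (fun y => fderiv ℝ f y v) x v ≤ 0 := by
  have hline : Tendsto (fun s : ℝ => x + s • v) (𝓝 0) (𝓝 x) :=
    Continuous.tendsto' (by fun_prop) _ _ (by simp)
  have hderiv : deriv (fun s : ℝ => f (x + s • v)) =ᶠ[𝓝 0]
      fun s => fderiv ℝ f (x + s • v) v := by
    filter_upwards [hline.eventually (eventually_differentiableAt_of_contDiffAt_two hf)] with s hs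
    exact hs.deriv_comp_add_smul
  have hderiv2 : deriv (fun s : ℝ => fderiv ℝ f (x + s • v) v) 0 =
      fderiv ℝ (fun y => fderiv ℝ f y v) x v := by
    have hdiff := differentiableAt_fderiv_apply hf v
    rw [← add_zero x, ← zero_smul ℝ v] at hdiff ⊢
    simpa using hdiff.deriv_comp_add_smul
  rw [← hderiv2, ← hderiv.deriv_eq]
  refine deriv_deriv_nonpos_of_isLocalMax h (ContinuousAt.comp_of_eq hf.continuousAt ?_ (by simp))
  fun_prop

theorem fderiv_add_const_mul_apply (hf : DifferentiableAt ℝ f x) (hg : DifferentiableAt ℝ g x)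
    (c : ℝ) (v : E) :
    fderiv ℝ (fun y => f y + c * g y) x v = fderiv ℝ f x v + c * fderiv ℝ g x v := by
  rw [fderiv_fun_add hf (hg.const_mul c), fderiv_const_mul hg]
  rfl

theorem fderiv_fderiv_add_const_mul_apply (hf : ContDiffAt ℝ 2 f x) (hg : ContDiffAt ℝ 2 g x)
    (c : ℝ) (v w : E) :
    fderiv ℝ (fun y => fderiv ℝ (fun z => f z + c * g z) y v) x w =
      fderiv ℝ (fun y => fderiv ℝ f y v) x w + c * fderiv ℝ (fun y => fderiv ℝ g y v) x w := by
  have hfirst : (fun y => fderiv ℝ (fun z => f z + c * g z) y v) =ᶠ[𝓝 x]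
      fun y => fderiv ℝ f y v + c * fderiv ℝ g y v := by
    filter_upwards [eventually_differentiableAt_of_contDiffAt_two hf,
      eventually_differentiableAt_of_contDiffAt_two hg] with y hfy hgy
    exact fderiv_add_const_mul_apply hfy hgy c v
  rw [hfirst.fderiv_eq, fderiv_add_const_mul_apply (differentiableAt_fderiv_apply hf v)
    (differentiableAt_fderiv_apply hg v)]

theorem fderiv_comp_apply {F : ℝ → ℝ} (hF : DifferentiableAt ℝ F (f x))
    (hf : DifferentiableAt ℝ f x) (v : E) :
    fderiv ℝ (fun y => F (f y)) x v = deriv F (f x) * fderiv ℝ f x v := by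
  have hcomp : HasFDerivAt (fun y => F (f y)) _ x :=
    hF.hasDerivAt.comp_hasFDerivAt x hf.hasFDerivAt
  rw [hcomp.fderiv]
  rfl

theorem fderiv_fderiv_comp_apply {F : ℝ → ℝ} (hF : ContDiffAt ℝ 2 F (f x))
    (hf : ContDiffAt ℝ 2 f x) (v : E) :
    fderiv ℝ (fun y => fderiv ℝ (fun z => F (f z)) y v) x v =
      deriv F (f x) * fderiv ℝ (fun y => fderiv ℝ f y v) x v +
        deriv (deriv F) (f x) * fderiv ℝ f x v ^ 2 := by
  have hfirst : (fun y => fderiv ℝ (fun z => F (f z)) y v) =ᶠ[𝓝 x]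
      fun y => deriv F (f y) * fderiv ℝ f y v := by
    filter_upwards [hf.continuousAt.eventually (eventually_differentiableAt_of_contDiffAt_two hF),
      eventually_differentiableAt_of_contDiffAt_two hf] with y hFy hfy
    exact fderiv_comp_apply hFy hfy v
  have hF' : DifferentiableAt ℝ (deriv F) (f x) :=
    (hF.derivWithin (m := 1) (by norm_num)).differentiableAt one_ne_zero
  have hf' : DifferentiableAt ℝ f x := hf.differentiableAt two_ne_zero
  rw [hfirst.fderiv_eq, fderiv_fun_mul (hF'.fun_comp' x hf') (differentiableAt_fderiv_apply hf v)]
  simp only [add_apply, smul_apply, smul_eq_mul, fderiv_comp_apply hF' hf']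
  ring

theorem fderiv_comp_const_sub_apply (hf : Differentiable ℝ f) (p x v : E) :
    fderiv ℝ (fun y => f (p - y)) x v = -fderiv ℝ f (p - x) v := by
  have hreflect : HasFDerivAt (fun y => p - y) (-ContinuousLinearMap.id ℝ E) x :=
    (hasFDerivAt_id x).const_sub p
  have hcomp : HasFDerivAt (fun y => f (p - y)) _ x := (hf (p - x)).hasFDerivAt.comp x hreflect
  rw [hcomp.fderiv]
  simp

end SecondDerivatives

section HeatOperator

variable {m : ℕ} {u v : SpT m → ℝ} {p : SpT m}

theorem heatOp_add_const_mul (hu : ContDiffAt ℝ 2 u p) (hv : ContDiffAt ℝ 2 v p) (c : ℝ) :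
    heatOp (fun q => u q + c * v q) p = heatOp u p + c * heatOp v p := by
  have hsecond (i : Fin m) :
      sDeriv (sDeriv (fun q => u q + c * v q) (sUnit m i)) (sUnit m i) p =
        sDeriv (sDeriv u (sUnit m i)) (sUnit m i) p +
          c * sDeriv (sDeriv v (sUnit m i)) (sUnit m i) p :=
    fderiv_fderiv_add_const_mul_apply hu hv c _ _
  have htime : tDeriv (fun q => u q + c * v q) p = tDeriv u p + c * tDeriv v p :=
    fderiv_add_const_mul_apply (hu.differentiableAt two_ne_zero)
      (hv.differentiableAt two_ne_zero) c _
  simp only [heatOp, sLap, hsecond, htime, Finset.sum_add_distrib, ← Finset.mul_sum]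
  ring

theorem heatOp_sub (hu : ContDiffAt ℝ 2 u p) (hv : ContDiffAt ℝ 2 v p) :
    heatOp (fun q => u q - v q) p = heatOp u p - heatOp v p := by
  simpa [← sub_eq_add_neg] using heatOp_add_const_mul hu hv (-1)

theorem heatOp_const (c : ℝ) : heatOp (fun _ : SpT m => c) p = 0 := by
  have hfirst (e : Spc m) : sDeriv (fun _ : SpT m => c) e = fun _ => 0 := by
    funext q
    simp [sDeriv]
  have hsecond (e : Spc m) : sDeriv (fun _ : SpT m => 0) e p = 0 := by simp [sDeriv]
  simp [heatOp, sLap, tDeriv, hfirst, hsecond]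

theorem heatOp_comp {F : ℝ → ℝ} (hF : ContDiffAt ℝ 2 F (u p)) (hu : ContDiffAt ℝ 2 u p) :
    heatOp (fun q => F (u q)) p =
      deriv F (u p) * heatOp u p + deriv (deriv F) (u p) * ‖sGrad u p‖ ^ 2 := by
  have hsecond (i : Fin m) :
      sDeriv (sDeriv (fun q => F (u q)) (sUnit m i)) (sUnit m i) p =
        deriv F (u p) * sDeriv (sDeriv u (sUnit m i)) (sUnit m i) p +
          deriv (deriv F) (u p) * sDeriv u (sUnit m i) p ^ 2 :=
    fderiv_fderiv_comp_apply hF hu _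
  have htime : tDeriv (fun q => F (u q)) p = deriv F (u p) * tDeriv u p :=
    fderiv_comp_apply (hF.differentiableAt two_ne_zero) (hu.differentiableAt two_ne_zero) _
  have hgrad : ‖sGrad u p‖ ^ 2 = ∑ i, sDeriv u (sUnit m i) p ^ 2 :=
    EuclideanSpace.real_norm_sq_eq _
  simp only [heatOp, sLap, hsecond, htime, hgrad, Finset.sum_add_distrib, ← Finset.mul_sum]
  ring

theorem continuousAt_heatOp (hu : ContDiffAt ℝ 2 u p) : ContinuousAt (heatOp u) p :=
  (tendsto_finsetSum _ fun _ _ => continuousAt_fderiv_fderiv_apply hu _ _).sub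
    (differentiableAt_fderiv_apply hu _).continuousAt

theorem sLap_nonpos_of_isLocalMax (hu : ContDiffAt ℝ 2 u p)
    (hmax : IsLocalMax (fun x => u (x, p.2)) p.1) : sLap u p ≤ 0 := by
  refine Finset.sum_nonpos fun i _ => fderiv_fderiv_apply_nonpos_of_isLocalMax hu ?_
  have hline : Tendsto (fun s : ℝ => p.1 + s • sUnit m i) (𝓝 0) (𝓝 p.1) :=
    Continuous.tendsto' (by fun_prop) _ _ (by simp)
  have hcoord (s : ℝ) : u (p + s • (sUnit m i, (0 : ℝ))) = u (p.1 + s • sUnit m i, p.2) :=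
    congrArg u (by ext <;> simp)
  simp only [hcoord]
  filter_upwards [hline.eventually hmax] with s hs
  simpa using hs

theorem tDeriv_nonneg_of_isLocalMaxOn (hu : DifferentiableAt ℝ u p)
    (hmax : IsLocalMaxOn (fun t => u (p.1, t)) (Iic p.2) p.2) : 0 ≤ tDeriv u p := by
  have htime : HasDerivAt (fun t => u (p.1, t)) (tDeriv u p) p.2 :=
    hu.hasFDerivAt.comp_hasDerivAt p.2 ((hasDerivAt_const p.2 p.1).prodMk (hasDerivAt_id p.2))
  have hslope : Tendsto (slope (fun t => u (p.1, t)) p.2) (𝓝[<] p.2) (𝓝 (tDeriv u p)) :=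
    (hasDerivWithinAt_iff_tendsto_slope' self_notMem_Iio).1 htime.hasDerivWithinAt
  refine ge_of_tendsto hslope ?_
  filter_upwards [hmax.filter_mono (nhdsWithin_mono _ Iio_subset_Iic_self), self_mem_nhdsWithin]
    with t hle hlt
  rw [slope_def_field]
  exact div_nonneg_of_nonpos (sub_nonpos.2 hle) (sub_nonpos.2 (le_of_lt hlt))

theorem heatOp_nonpos_of_isLocalMaxOn (hu : ContDiffAt ℝ 2 u p)
    (hmax : IsLocalMaxOn u {q | q.2 ≤ p.2} p) : heatOp u p ≤ 0 := by
  have hspace : IsLocalMax (fun x => u (x, p.2)) p.1 :=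
    hmax.comp_tendsto (g := fun x => (x, p.2)) <| tendsto_nhdsWithin_iff.2
      ⟨Continuous.tendsto' (by fun_prop) _ _ rfl, .of_forall fun _ => le_refl p.2⟩
  have htime : IsLocalMaxOn (fun t => u (p.1, t)) (Iic p.2) p.2 :=
    hmax.comp_tendsto (g := fun t => (p.1, t)) <| tendsto_nhdsWithin_iff.2
      ⟨Continuous.continuousWithinAt (by fun_prop), self_mem_nhdsWithin⟩
  have hlap := sLap_nonpos_of_isLocalMax hu hspace
  have ht := tDeriv_nonneg_of_isLocalMaxOn (hu.differentiableAt two_ne_zero) htime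
  unfold heatOp
  linarith

theorem sLap_comp_const_sub (hu : ContDiff ℝ 2 u) (p q : SpT m) :
    sLap (fun x => u (p - x)) q = sLap u (p - q) := by
  refine Finset.sum_congr rfl fun i _ => ?_
  have hfirst : sDeriv (fun x => u (p - x)) (sUnit m i) = fun x => -sDeriv u (sUnit m i) (p - x) :=
    funext fun x => fderiv_comp_const_sub_apply (hu.differentiable two_ne_zero) p x _
  have hsecond := fderiv_comp_const_sub_apply
    (fun x => differentiableAt_fderiv_apply hu.contDiffAt (sUnit m i, 0)) p q (sUnit m i, 0)
  rw [hfirst, sDeriv, fderiv_fun_neg, neg_apply, sDeriv]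
  exact neg_eq_iff_eq_neg.2 hsecond

theorem tDeriv_comp_const_sub (hu : Differentiable ℝ u) (p q : SpT m) :
    tDeriv (fun x => u (p - x)) q = -tDeriv u (p - q) :=
  fderiv_comp_const_sub_apply hu p q _

theorem sLap_add_tDeriv_eq_zero_of_notMem_tsupport (hp : p ∉ tsupport u) :
    sLap u p + tDeriv u p = 0 := by
  have hfirst (e : SpT m) : p ∉ tsupport fun q => fderiv ℝ u q e :=
    fun h => hp (tsupport_fderiv_apply_subset ℝ e h)
  have hsecond (i : Fin m) : sDeriv (sDeriv u (sUnit m i)) (sUnit m i) p = 0 :=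
    image_eq_zero_of_notMem_tsupport (f := sDeriv (sDeriv u (sUnit m i)) (sUnit m i)) fun h =>
      hfirst _ (tsupport_fderiv_apply_subset ℝ _ h)
  have htime : tDeriv u p = 0 := image_eq_zero_of_notMem_tsupport (hfirst _)
  simp [sLap, hsecond, htime]

end HeatOperator

section Mollification

theorem fderiv_convolution_right_apply {E : Type*} [NormedAddCommGroup E] [NormedSpace ℝ E]
    [MeasurableSpace E] [BorelSpace E] [FiniteDimensional ℝ E] {μ : Measure E} [μ.IsAddHaarMeasure]
    (L : ℝ →L[ℝ] ℝ →L[ℝ] ℝ) {f g : E → ℝ} (hf : LocallyIntegrable f μ) (hg : ContDiff ℝ 1 g)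
    (hcg : HasCompactSupport g) (v : E) :
    (fun x => fderiv ℝ (convolution f g L μ) x v) =
      convolution f (fun x => fderiv ℝ g x v) L μ := by
  funext x
  rw [(hcg.hasFDerivAt_convolution_right L hf hg x).fderiv]
  exact convolution_precompR_apply L hf (hcg.fderiv ℝ) (hg.continuous_fderiv one_ne_zero) x v

variable {m : ℕ}

instance isAddHaarMeasure_volume_SpT : (volume : Measure (SpT m)).IsAddHaarMeasure :=
  Measure.prod.instIsAddHaarMeasure volume volume

theorem heatOp_convolution (L : ℝ →L[ℝ] ℝ →L[ℝ] ℝ) {f η : SpT m → ℝ} (hf : LocallyIntegrable f)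
    (hη : ContDiff ℝ 2 η) (hcη : HasCompactSupport η) :
    heatOp (convolution f η L volume) = convolution f (heatOp η) L volume := by
  have hη' (e : SpT m) : ContDiff ℝ 1 fun q => fderiv ℝ η q e :=
    (hη.fderiv_right (by norm_num)).clm_apply contDiff_const
  have hcη' (e : SpT m) : HasCompactSupport fun q => fderiv ℝ η q e := hcη.fderiv_apply ℝ e
  have hfirst (e : SpT m) : (fun q => fderiv ℝ (convolution f η L volume) q e) =
      convolution f (fun q => fderiv ℝ η q e) L volume :=
    fderiv_convolution_right_apply L hf (hη.of_le one_le_two) hcη e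
  have hsecond (i : Fin m) : sDeriv (sDeriv (convolution f η L volume) (sUnit m i)) (sUnit m i) =
      convolution f (sDeriv (sDeriv η (sUnit m i)) (sUnit m i)) L volume := by
    have hspace : sDeriv (convolution f η L volume) (sUnit m i) = _ := hfirst (sUnit m i, 0)
    rw [hspace]
    exact fderiv_convolution_right_apply L hf (hη' _) (hcη' _) _
  have htime : tDeriv (convolution f η L volume) = convolution f (tDeriv η) L volume := hfirst _
  funext p
  have hint (i : Fin m) :
      ConvolutionExistsAt f (sDeriv (sDeriv η (sUnit m i)) (sUnit m i)) p L volume :=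
    ((hcη' _).fderiv_apply ℝ _).convolutionExists_right L hf
      (((hη' _).continuous_fderiv one_ne_zero).clm_apply continuous_const) p
  have hint' : ConvolutionExistsAt f (tDeriv η) p L volume :=
    (hcη' _).convolutionExists_right L hf (hη' _).continuous p
  simp only [heatOp, sLap, hsecond, htime, convolution_def]
  rw [← integral_finsetSum _ fun i _ => hint i,
    ← integral_sub (integrable_finsetSum _ fun i _ => hint i) hint']
  simp only [map_sub, map_sum]

/-- `U` is subcaloric on `D` in the sense of distributions: the integral over `D` of `U` against
the adjoint heat operator of any nonnegative test function supported in `D` is nonnegative. -/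
def IsSubcaloricOn (U : SpT m → ℝ) (D : Set (SpT m)) : Prop :=
  ∀ φ : SpT m → ℝ, ContDiff ℝ (⊤ : ℕ∞) φ → HasCompactSupport φ → tsupport φ ⊆ D →
    (∀ p, 0 ≤ φ p) → 0 ≤ ∫ p in D, U p * (sLap φ p + tDeriv φ p)

variable {U : SpT m → ℝ} {D : Set (SpT m)}

theorem IsSubcaloricOn.heatOp_convolution_nonneg (hU : IsSubcaloricOn U D) {f η : SpT m → ℝ}
    (hf : LocallyIntegrable f) (hη : ContDiff ℝ (⊤ : ℕ∞) η) (hη0 : ∀ q, 0 ≤ η q) {r : ℝ}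
    (hηr : tsupport η ⊆ closedBall 0 r) {p : SpT m} (hpD : closedBall p r ⊆ D)
    (hfU : EqOn f U (closedBall p r)) :
    0 ≤ heatOp (convolution f η (ContinuousLinearMap.mul ℝ ℝ) volume) p := by
  set φ : SpT m → ℝ := fun q => η (p - q) with hφ
  have hη2 : ContDiff ℝ 2 η := contDiff_infty.1 hη 2
  have hφp : tsupport φ ⊆ closedBall p r := by
    refine closure_minimal (fun q hq => ?_) isClosed_closedBall
    have hpq : p - q ∈ closedBall 0 r := hηr (subset_tsupport η hq)
    simpa [dist_comm q, dist_eq_norm] using hpq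
  have hadjoint (q : SpT m) : heatOp η (p - q) = sLap φ q + tDeriv φ q := by
    rw [hφ, sLap_comp_const_sub hη2, tDeriv_comp_const_sub (hη2.differentiable two_ne_zero), heatOp,
      sub_eq_add_neg]
  have hzero (q : SpT m) (hq : q ∉ closedBall p r) : sLap φ q + tDeriv φ q = 0 :=
    sLap_add_tDeriv_eq_zero_of_notMem_tsupport fun h => hq (hφp h)
  have hcη : HasCompactSupport η :=
    (isCompact_closedBall 0 r).of_isClosed_subset (isClosed_tsupport η) hηr
  calc 0 ≤ ∫ q in D, U q * (sLap φ q + tDeriv φ q) :=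
        hU φ (hη.comp (contDiff_const.sub contDiff_id))
          ((isCompact_closedBall p r).of_isClosed_subset (isClosed_tsupport φ) hφp)
          (hφp.trans hpD) fun _ => hη0 _
    _ = ∫ q, U q * (sLap φ q + tDeriv φ q) :=
        setIntegral_eq_integral_of_forall_compl_eq_zero fun q hq => by
          rw [hzero q fun h => hq (hpD h), mul_zero]
    _ = ∫ q, f q * heatOp η (p - q) := integral_congr_ae <| .of_forall fun q => by
        by_cases hq : q ∈ closedBall p r
        · simp only [hfU hq, hadjoint]
        · simp only [hadjoint, hzero q hq, mul_zero]
    _ = heatOp (convolution f η (ContinuousLinearMap.mul ℝ ℝ) volume) p := by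
        rw [heatOp_convolution _ hf hη2 hcη]
        rfl

theorem IsSubcaloricOn.exists_contDiff_approx (hU : IsSubcaloricOn U D) (hD : IsOpen D)
    (hUc : ContinuousOn U D) {K : Set (SpT m)} (hK : IsCompact K) (hKD : K ⊆ D) {ε : ℝ}
    (hε : 0 < ε) :
    ∃ V : SpT m → ℝ, ContDiff ℝ 2 V ∧ ∀ p ∈ K, |V p - U p| ≤ ε ∧ 0 ≤ heatOp V p := by
  obtain ⟨ρ, hρ, hρD⟩ := hK.exists_cthickening_subset_open hD hKD
  set K' := cthickening ρ K
  have hK' : IsCompact K' := hK.cthickening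
  have hUK' : ContinuousOn U K' := hUc.mono hρD
  obtain ⟨δ, hδ, hUδ⟩ :=
    Metric.uniformContinuousOn_iff.1 (hK'.uniformContinuousOn_of_continuous hUK') ε hε
  obtain ⟨r, hr, hrmin⟩ := exists_between (lt_min hρ hδ)
  obtain ⟨hrρ, hrδ⟩ := lt_min_iff.1 hrmin
  have hball (p) (hp : p ∈ K) : closedBall p r ⊆ K' :=
    (closedBall_subset_cthickening hp r).trans (cthickening_mono hrρ.le K)
  set f := K'.indicator U
  have hfU : EqOn f U K' := eqOn_indicator
  have hf : Integrable f :=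
    (integrable_indicator_iff hK'.measurableSet).2 (hUK'.integrableOn_compact hK')
  let η : ContDiffBump (0 : SpT m) := ⟨r / 2, r, half_pos hr, half_lt_self hr⟩
  refine ⟨convolution f (η.normed volume) (ContinuousLinearMap.mul ℝ ℝ) volume,
    η.hasCompactSupport_normed.contDiff_convolution_right (n := 2) _ hf.locallyIntegrable
      η.contDiff_normed, fun p hp => ⟨?_, ?_⟩⟩
  · have hpK' : p ∈ K' := hball p hp (mem_closedBall_self hr.le)
    have happrox := η.dist_normed_convolution_le (μ := volume) (x₀ := p) hf.aestronglyMeasurable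
      fun q hq => by
        have hqK' : q ∈ K' := hball p hp (ball_subset_closedBall hq)
        rw [hfU hqK', hfU hpK']
        exact (hUδ q hqK' p hpK' ((mem_ball.1 hq).trans hrδ)).le
    have hflip : (ContinuousLinearMap.lsmul ℝ ℝ).flip = ContinuousLinearMap.mul ℝ ℝ :=
      ContinuousLinearMap.flip_mul
    rwa [← convolution_flip, hfU hpK', Real.dist_eq, hflip] at happrox
  · exact hU.heatOp_convolution_nonneg hf.locallyIntegrable η.contDiff_normed η.nonneg_normed
      η.tsupport_normed_eq.subset ((hball p hp).trans hρD) fun q hq => hfU (hball p hp hq)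

end Mollification

section ViscosityComparison

variable {m : ℕ} {U v : SpT m → ℝ} {D : Set (SpT m)} {p : SpT m}

theorem IsSubcaloricOn.exists_mem_ball_heatOp_nonneg (hU : IsSubcaloricOn U D) (hD : IsOpen D)
    (hUc : ContinuousOn U D) {r : ℝ} (hr : 0 < r) (hpD : closedBall p r ⊆ D)
    (hv : ∀ q ∈ closedBall p r, ContDiffAt ℝ 2 v q) {κ : ℝ} (hκ : 0 < κ)
    (hsphere : ∀ q ∈ sphere p r, q.2 ≤ p.2 → U q - v q + κ ≤ U p - v p) :
    ∃ q ∈ ball p r, 0 ≤ heatOp v q := by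
  obtain ⟨V, hV, hVU⟩ :=
    hU.exists_contDiff_approx hD hUc (isCompact_closedBall p r) hpD (div_pos hκ zero_lt_three)
  have hpast : IsClosed {q : SpT m | q.2 ≤ p.2} := isClosed_le continuous_snd continuous_const
  have hp : p ∈ closedBall p r := mem_closedBall_self hr.le
  obtain ⟨q, ⟨hqr, hqp⟩, hmax⟩ :=
    ((isCompact_closedBall p r).inter_right hpast).exists_isMaxOn (f := fun q => V q - v q)
      ⟨p, hp, le_refl p.2⟩ fun q hq =>
        (hV.continuous.continuousAt.sub (hv q hq.1).continuousAt).continuousWithinAt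
  have hqp' : q.2 ≤ p.2 := hqp
  have hqball : q ∈ ball p r := by
    refine (ball_union_sphere.symm.subset hqr).resolve_right fun hqs => ?_
    have hle : V p - v p ≤ V q - v q := hmax ⟨hp, le_refl p.2⟩
    have hVUp := abs_le.1 (hVU p hp).1
    have hVUq := abs_le.1 (hVU q hqr).1
    linarith [hsphere q hqs hqp']
  have hlocal : IsLocalMaxOn (fun q' => V q' - v q') {q' | q'.2 ≤ q.2} q := by
    filter_upwards [mem_nhdsWithin_of_mem_nhds (isOpen_ball.mem_nhds hqball), self_mem_nhdsWithin]
      with q' hq'r hq'q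
    exact hmax ⟨ball_subset_closedBall hq'r, hqp'.trans' hq'q⟩
  have hheat := heatOp_nonpos_of_isLocalMaxOn (hV.contDiffAt.sub (hv q hqr)) hlocal
  rw [heatOp_sub hV.contDiffAt (hv q hqr)] at hheat
  exact ⟨q, hqball, by linarith [(hVU q hqr).2]⟩

theorem IsSubcaloricOn.heatOp_nonneg_of_isLocalMaxOn (hU : IsSubcaloricOn U D) (hD : IsOpen D)
    (hUc : ContinuousOn U D) (hp : p ∈ D) (hv : ContDiffAt ℝ 2 v p)
    (hmax : IsLocalMaxOn (fun q => U q - v q) {q | q.2 ≤ p.2} p) : 0 ≤ heatOp v p := by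
  by_contra! hneg
  -- Adding a small multiple of `g` to `v` makes the maximum strict and keeps the sign of `heatOp`.
  let g : SpT m → ℝ := fun q => ‖q.1 - p.1‖ ^ 2 + (q.2 - p.2) ^ 2
  have hg : ContDiff ℝ 2 g := by
    have hspace : ContDiff ℝ 2 fun q : SpT m => ‖q.1 - p.1‖ ^ 2 :=
      (contDiff_fst.sub contDiff_const).norm_sq ℝ
    exact hspace.add (by fun_prop)
  have hgp : g p = 0 := by simp [g]
  have hdist (q : SpT m) : dist q p ^ 2 ≤ g q := by
    rw [Prod.dist_eq, dist_eq_norm, Real.dist_eq]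
    rcases max_choice ‖q.1 - p.1‖ |q.2 - p.2| with h | h <;> rw [h]
    · exact le_add_of_nonneg_right (sq_nonneg _)
    · rw [sq_abs]
      exact le_add_of_nonneg_left (sq_nonneg _)
  obtain ⟨ε, hε, hεg⟩ := exists_pos_mul_lt (neg_pos.2 hneg) (heatOp g p)
  let w : SpT m → ℝ := fun q => v q + ε * g q
  have hw : ContDiffAt ℝ 2 w p := hv.add (contDiffAt_const.mul hg.contDiffAt)
  have hwp : heatOp w p < 0 := by
    rw [heatOp_add_const_mul hv hg.contDiffAt]
    linarith
  have hnear : ∀ᶠ q in 𝓝 p, (q.2 ≤ p.2 → U q - v q ≤ U p - v p) ∧ q ∈ D ∧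
      ContDiffAt ℝ 2 w q ∧ heatOp w q < 0 :=
    (eventually_nhdsWithin_iff.1 hmax).and <| (hD.eventually_mem hp).and <|
      (hw.eventually (by simp)).and ((continuousAt_heatOp hw).eventually_lt_const hwp)
  obtain ⟨r, hr, hrp⟩ := nhds_basis_closedBall.mem_iff.1 hnear
  obtain ⟨q, hq, hwq⟩ := hU.exists_mem_ball_heatOp_nonneg hD hUc hr (fun q hq => (hrp hq).2.1)
    (fun q hq => (hrp hq).2.2.1) (mul_pos hε (pow_pos hr 2)) fun q hq hqp => by
      have hmaxq := (hrp (sphere_subset_closedBall hq)).1 hqp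
      have hgq := mul_le_mul_of_nonneg_left (hdist q) hε.le
      rw [mem_sphere.1 hq] at hgq
      simp only [w, hgp]
      linarith
  exact (hrp (ball_subset_closedBall hq)).2.2.2.not_ge hwq

/-- The parabolic boundary (bottom and lateral side) of the cylinder `Ω × (a, b)`; the top
`Ω × {b}` and the edge `∂Ω × {a, b}` are excluded. -/
def parabolicBoundary (Ω : Set (Spc m)) (a b : ℝ) : Set (SpT m) :=
  Ω ×ˢ {a} ∪ frontier Ω ×ˢ Ioo a b

variable {Ω : Set (Spc m)} {a b : ℝ}

theorem IsSubcaloricOn.le_of_heatOp_neg (hU : IsSubcaloricOn U (Ω ×ˢ Ioo a b)) (hΩ : IsOpen Ω)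
    (hΩb : Bornology.IsBounded Ω) (hUc : ContinuousOn U (closure (Ω ×ˢ Ioo a b)))
    (hvc : ContinuousOn v (closure (Ω ×ˢ Ioo a b)))
    (hv : ∀ q ∈ Ω ×ˢ Ioo a b, ContDiffAt ℝ 2 v q) (hheat : ∀ q ∈ Ω ×ˢ Ioo a b, heatOp v q < 0)
    (hbdry : ∀ q ∈ parabolicBoundary Ω a b, U q ≤ v q) (hp : p ∈ Ω ×ˢ Ioo a b) : U p ≤ v p := by
  have hab : a < b := hp.2.1.trans hp.2.2
  rw [closure_prod_eq, closure_Ioo hab.ne] at hUc hvc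
  have hUv := hUc.sub hvc
  have hpast : closure Ω ×ˢ Icc a p.2 ⊆ closure Ω ×ˢ Icc a b :=
    prod_mono_right (Icc_subset_Icc_right hp.2.2.le)
  obtain ⟨q, ⟨hqΩ, hqa, hqp⟩, hmax⟩ :=
    (hΩb.isCompact_closure.prod (isCompact_Icc (a := a) (b := p.2))).exists_isMaxOn
      ⟨p, subset_closure hp.1, hp.2.1.le, le_rfl⟩ (hUv.mono hpast)
  have hbottom (x) (hx : x ∈ closure Ω) : U (x, a) - v (x, a) ≤ 0 := by
    have hslice : ContinuousOn (fun y => U (y, a) - v (y, a)) (closure Ω) :=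
      hUv.comp (by fun_prop) fun y hy => ⟨hy, left_mem_Icc.2 hab.le⟩
    exact le_on_closure (fun y hy => sub_nonpos.2 (hbdry (y, a) (.inl ⟨hy, rfl⟩)))
      hslice continuousOn_const hx
  refine sub_nonpos.1 ((hmax ⟨subset_closure hp.1, hp.2.1.le, le_rfl⟩).trans ?_)
  rcases hqa.eq_or_lt with hqa | hqa
  · simpa [hqa] using hbottom q.1 hqΩ
  have hqt : q.2 ∈ Ioo a b := ⟨hqa, hqp.trans_lt hp.2.2⟩
  by_cases hqΩ' : q.1 ∈ Ω
  · have hlocal : IsLocalMaxOn (fun q' => U q' - v q') {q' | q'.2 ≤ q.2} q := by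
      filter_upwards [mem_nhdsWithin_of_mem_nhds ((hΩ.prod isOpen_Ioo).mem_nhds ⟨hqΩ', hqt⟩),
        self_mem_nhdsWithin] with q' hq' hq'q
      exact hmax ⟨subset_closure hq'.1, hq'.2.1.le, le_trans hq'q hqp⟩
    have hcont : ContinuousOn U (Ω ×ˢ Ioo a b) :=
      hUc.mono (prod_mono subset_closure Ioo_subset_Icc_self)
    exact absurd (hU.heatOp_nonneg_of_isLocalMaxOn (hΩ.prod isOpen_Ioo) hcont ⟨hqΩ', hqt⟩
      (hv q ⟨hqΩ', hqt⟩) hlocal) (hheat q ⟨hqΩ', hqt⟩).not_ge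
  · have hqfr : q.1 ∈ frontier Ω := ⟨hqΩ, by rwa [hΩ.interior_eq]⟩
    exact sub_nonpos.2 (hbdry q (.inr ⟨hqfr, hqt⟩))

theorem heatOp_snd_sub (a : ℝ) : heatOp (fun q : SpT m => q.2 - a) p = -1 := by
  have hfderiv (q e : SpT m) : fderiv ℝ (fun q : SpT m => q.2 - a) q e = e.2 := by
    rw [fderiv_sub_const, fderiv_snd]
    rfl
  have hspace (e : Spc m) : sDeriv (fun q : SpT m => q.2 - a) e = fun _ => 0 :=
    funext fun q => hfderiv q (e, 0)
  have htime : tDeriv (fun q : SpT m => q.2 - a) p = 1 := hfderiv p (0, 1)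
  have hzero (e : Spc m) : sDeriv (fun _ : SpT m => 0) e p = 0 := by simp [sDeriv]
  simp [heatOp, sLap, hspace, htime, hzero]

theorem IsSubcaloricOn.le_of_heatOp_nonpos (hU : IsSubcaloricOn U (Ω ×ˢ Ioo a b)) (hΩ : IsOpen Ω)
    (hΩb : Bornology.IsBounded Ω) (hUc : ContinuousOn U (closure (Ω ×ˢ Ioo a b)))
    (hvc : ContinuousOn v (closure (Ω ×ˢ Ioo a b)))
    (hv : ∀ q ∈ Ω ×ˢ Ioo a b, ContDiffAt ℝ 2 v q) (hheat : ∀ q ∈ Ω ×ˢ Ioo a b, heatOp v q ≤ 0)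
    (hbdry : ∀ q ∈ parabolicBoundary Ω a b, U q ≤ v q) (hp : p ∈ Ω ×ˢ Ioo a b) : U p ≤ v p := by
  have hstrict (ε : ℝ) (hε : 0 < ε) : U p ≤ v p + ε * (p.2 - a) := by
    refine hU.le_of_heatOp_neg (v := fun q => v q + ε * (q.2 - a)) hΩ hΩb hUc
      (hvc.add (by fun_prop)) (fun q hq => (hv q hq).add (by fun_prop)) (fun q hq => ?_)
      (fun q hq => ?_) hp
    · rw [heatOp_add_const_mul (hv q hq) (by fun_prop), heatOp_snd_sub]
      linarith [hheat q hq]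
    · have hqa : a ≤ q.2 := hq.elim (fun h => h.2.ge) fun h => h.2.1.le
      exact (hbdry q hq).trans (le_add_of_nonneg_right (mul_nonneg hε.le (sub_nonneg.2 hqa)))
  have hlim : Tendsto (fun ε => v p + ε * (p.2 - a)) (𝓝[>] 0) (𝓝 (v p)) :=
    (Continuous.tendsto' (by fun_prop) _ _ (by simp)).mono_left nhdsWithin_le_nhds
  exact ge_of_tendsto hlim (eventually_nhdsWithin_of_forall hstrict)

end ViscosityComparison

section Barrier

theorem heatOp_exp_neg_mul_add_sub {m : ℕ} {u : SpT m → ℝ} {p : SpT m} (hu : ContDiffAt ℝ 2 u p)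
    (α b c : ℝ) :
    heatOp (fun q => Real.exp (-α * (u q + b)) - c) p =
      α * Real.exp (-α * (u p + b)) * (α * ‖sGrad u p‖ ^ 2 - heatOp u p) := by
  let F : ℝ → ℝ := fun s => Real.exp (-α * (s + b)) - c
  have hexp (s : ℝ) : HasDerivAt (fun s => Real.exp (-α * (s + b)))
      (-α * Real.exp (-α * (s + b))) s := by
    simpa [mul_comm] using (((hasDerivAt_id s).add_const b).const_mul (-α)).exp
  have hF' : deriv F = fun s => -α * Real.exp (-α * (s + b)) :=
    funext fun s => ((hexp s).sub_const c).deriv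
  have hF'' (s : ℝ) : deriv (deriv F) s = -α * (-α * Real.exp (-α * (s + b))) := by
    rw [hF']
    exact ((hexp s).const_mul (-α)).deriv
  have hF : ContDiff ℝ 2 F := by fun_prop
  refine (heatOp_comp hF.contDiffAt hu).trans ?_
  rw [hF'', hF']
  ring

variable {n : ℕ} {p : SpT (n + 1)}

/-- The paraboloid `|x'|² - x_n + t²`, whose sublevel sets carry the barrier. -/
def barrierProfile (n : ℕ) (p : SpT (n + 1)) : ℝ :=
  ∑ i : Fin n, p.1 i.castSucc ^ 2 - p.1 (Fin.last n) + p.2 ^ 2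

theorem contDiff_barrierProfile : ContDiff ℝ 2 (barrierProfile n) := by
  unfold barrierProfile
  fun_prop

theorem hasFDerivAt_fst_apply (j : Fin (n + 1)) :
    HasFDerivAt (fun q : SpT (n + 1) => q.1 j)
      ((EuclideanSpace.proj j : Spc (n + 1) →L[ℝ] ℝ) ∘L .fst ℝ (Spc (n + 1)) ℝ) p :=
  ContinuousLinearMap.hasFDerivAt
    ((EuclideanSpace.proj j : Spc (n + 1) →L[ℝ] ℝ) ∘L .fst ℝ (Spc (n + 1)) ℝ)

theorem fderiv_barrierProfile_apply (p e : SpT (n + 1)) :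
    fderiv ℝ (barrierProfile n) p e =
      ∑ i : Fin n, 2 * p.1 i.castSucc * e.1 i.castSucc - e.1 (Fin.last n) + 2 * p.2 * e.2 := by
  have h : HasFDerivAt (barrierProfile n) _ p :=
    ((HasFDerivAt.fun_sum fun (i : Fin n) _ => (hasFDerivAt_fst_apply i.castSucc).pow 2).sub
      (hasFDerivAt_fst_apply (Fin.last n))).add (hasFDerivAt_snd.pow 2)
  rw [h.fderiv]
  simp [mul_assoc]

theorem sDeriv_barrierProfile_castSucc (i : Fin n) :
    sDeriv (barrierProfile n) (sUnit (n + 1) i.castSucc) = fun p => 2 * p.1 i.castSucc := by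
  funext p
  simp [sDeriv, fderiv_barrierProfile_apply, sUnit, Fin.castSucc_ne_last]

theorem sDeriv_barrierProfile_last :
    sDeriv (barrierProfile n) (sUnit (n + 1) (Fin.last n)) = fun _ => -1 := by
  funext p
  simp [sDeriv, fderiv_barrierProfile_apply, sUnit, Fin.castSucc_ne_last]

theorem heatOp_barrierProfile (p : SpT (n + 1)) :
    heatOp (barrierProfile n) p = 2 * n - 2 * p.2 := by
  have hlast : sDeriv (sDeriv (barrierProfile n) (sUnit (n + 1) (Fin.last n)))
      (sUnit (n + 1) (Fin.last n)) p = 0 := by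
    simp [sDeriv_barrierProfile_last, sDeriv]
  have hcast (i : Fin n) : sDeriv (sDeriv (barrierProfile n) (sUnit (n + 1) i.castSucc))
      (sUnit (n + 1) i.castSucc) p = 2 := by
    have h := (hasFDerivAt_fst_apply (p := p) i.castSucc).const_mul 2
    rw [sDeriv_barrierProfile_castSucc, sDeriv, h.fderiv]
    simp [sUnit]
  have htime : tDeriv (barrierProfile n) p = 2 * p.2 := by
    simp [tDeriv, fderiv_barrierProfile_apply]
  simp [heatOp, sLap, Fin.sum_univ_castSucc, hlast, hcast, htime, mul_comm]

theorem one_le_norm_sGrad_barrierProfile (p : SpT (n + 1)) :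
    1 ≤ ‖sGrad (barrierProfile n) p‖ := by
  have hlast : sGrad (barrierProfile n) p (Fin.last n) = -1 :=
    congrFun sDeriv_barrierProfile_last p
  simpa [hlast] using PiLp.norm_apply_le (sGrad (barrierProfile n) p) (Fin.last n)

theorem barrierProfile_eq (p : SpT (n + 1)) :
    barrierProfile n p = ‖p.1‖ ^ 2 - p.1 (Fin.last n) ^ 2 - p.1 (Fin.last n) + p.2 ^ 2 := by
  rw [EuclideanSpace.real_norm_sq_eq, Fin.sum_univ_castSucc, barrierProfile]
  ring

theorem sq_sub_le_barrierProfile (p : SpT (n + 1)) :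
    p.2 ^ 2 - p.1 (Fin.last n) ≤ barrierProfile n p := by
  have hsum : 0 ≤ ∑ i : Fin n, p.1 i.castSucc ^ 2 := Finset.sum_nonneg fun i _ => sq_nonneg _
  unfold barrierProfile
  linarith

theorem neg_one_le_barrierProfile (hp : ‖p.1‖ ≤ 1) : -1 ≤ barrierProfile n p := by
  have hlast := (abs_le.1 ((PiLp.norm_apply_le p.1 (Fin.last n)).trans hp)).2
  linarith [sq_sub_le_barrierProfile p, sq_nonneg p.2]

theorem le_barrierProfile_of_mem_parBdryQ1 (hp : p ∈ parBdryQ1 n)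
    (hlast : p.1 (Fin.last n) ≤ 1 / 4) : 11 / 16 ≤ barrierProfile n p := by
  rcases hp with ⟨-, hbottom⟩ | ⟨hside, -⟩
  · have hle := sq_sub_le_barrierProfile p
    rw [hbottom] at hle
    linarith
  · rw [dist_zero_right] at hside
    have habs := abs_le.1 ((PiLp.norm_apply_le p.1 (Fin.last n)).trans hside.le)
    rw [barrierProfile_eq, hside]
    nlinarith [sq_nonneg p.2, mul_nonneg (sub_nonneg.2 hlast) (neg_le_iff_add_nonneg.1 habs.1)]

theorem barrierProfile_le_of_mem_Q_half (hp : p ∈ Q (0 : Spc (n + 1)) 0 (1 / 2)) :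
    barrierProfile n p ≤ 9 / 16 := by
  obtain ⟨hspace, htime⟩ := hp
  rw [dist_zero_right] at hspace
  rw [sub_zero] at htime
  have hspace' : ‖p.1‖ ^ 2 ≤ (1 / 2) ^ 2 := pow_le_pow_left₀ (norm_nonneg _) hspace.le 2
  have htime' : p.2 ^ 2 ≤ ((1 / 2) ^ 2) ^ 2 := sq_le_sq' (abs_lt.1 htime).1.le (abs_lt.1 htime).2.le
  rw [barrierProfile_eq]
  linarith [sq_nonneg (p.1 (Fin.last n) + 1 / 2)]

/-- The subcaloric barrier `exp (-α (q + 1)) - exp (-α (11/16 + 1))` with `q = barrierProfile n`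
and `α = 2n + 2`. The value `11/16` bounds `q` from below on the part `x_n ≤ 1/4` of the parabolic
boundary of `Q₁`, and the shift by `1` makes the barrier at most `1`. -/
def barrier (n : ℕ) (p : SpT (n + 1)) : ℝ :=
  Real.exp (-(2 * n + 2) * (barrierProfile n p + 1)) - Real.exp (-(2 * n + 2) * (11 / 16 + 1))

theorem contDiff_barrier : ContDiff ℝ 2 (barrier n) :=
  (contDiff_const.mul (contDiff_barrierProfile.add contDiff_const)).exp.sub contDiff_const

theorem heatOp_barrier_nonneg (hp : -1 ≤ p.2) : 0 ≤ heatOp (barrier n) p := by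
  have hheat : heatOp (barrier n) p = _ :=
    heatOp_exp_neg_mul_add_sub contDiff_barrierProfile.contDiffAt _ _ _
  have hgrad : 1 ≤ ‖sGrad (barrierProfile n) p‖ ^ 2 :=
    one_le_pow₀ (one_le_norm_sGrad_barrierProfile p)
  have hα : (0 : ℝ) ≤ 2 * n + 2 := by positivity
  have hαgrad := mul_le_mul_of_nonneg_left hgrad hα
  rw [hheat, heatOp_barrierProfile]
  exact mul_nonneg (by positivity) (by linarith)

theorem barrier_le_one (hp : ‖p.1‖ ≤ 1) : barrier n p ≤ 1 := by
  have hα : (0 : ℝ) ≤ 2 * n + 2 := by positivity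
  have hexp : Real.exp (-(2 * n + 2) * (barrierProfile n p + 1)) ≤ 1 :=
    Real.exp_le_one_iff.2 <| mul_nonpos_of_nonpos_of_nonneg (neg_nonpos.2 hα)
      (neg_le_iff_add_nonneg.1 (neg_one_le_barrierProfile hp))
  exact (sub_le_self _ (Real.exp_pos _).le).trans hexp

theorem barrier_nonpos_of_mem_parBdryQ1 (hp : p ∈ parBdryQ1 n)
    (hlast : p.1 (Fin.last n) ≤ 1 / 4) : barrier n p ≤ 0 := by
  have hα : (0 : ℝ) ≤ 2 * n + 2 := by positivity
  rw [barrier, sub_nonpos, Real.exp_le_exp]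
  exact mul_le_mul_of_nonpos_left
    (add_le_add_left (le_barrierProfile_of_mem_parBdryQ1 hp hlast) 1) (neg_nonpos.2 hα)

theorem exists_pos_le_barrier (n : ℕ) :
    ∃ c : ℝ, 0 < c ∧ c < 1 ∧ ∀ p ∈ Q (0 : Spc (n + 1)) 0 (1 / 2), c ≤ barrier n p := by
  have hα : (0 : ℝ) < 2 * n + 2 := by positivity
  refine ⟨Real.exp (-(2 * n + 2) * (9 / 16 + 1)) - Real.exp (-(2 * n + 2) * (11 / 16 + 1)),
    ?_, ?_, fun p hp => sub_le_sub_right (Real.exp_le_exp.2 ?_) _⟩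
  · rw [sub_pos, Real.exp_lt_exp]
    linarith
  · have hexp : Real.exp (-(2 * n + 2) * (9 / 16 + 1)) < 1 := Real.exp_lt_one_iff.2 (by linarith)
    linarith [Real.exp_pos (-(2 * n + 2) * (11 / 16 + 1))]
  · exact mul_le_mul_of_nonpos_left (add_le_add_left (barrierProfile_le_of_mem_Q_half hp) 1)
      (neg_nonpos.2 hα.le)

end Barrier

section UnitCylinder

theorem Q_eq_ball_prod_Ioo {m : ℕ} (x₀ : Spc m) (t₀ r : ℝ) :
    Q x₀ t₀ r = ball x₀ r ×ˢ Ioo (t₀ - r ^ 2) (t₀ + r ^ 2) := by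
  ext p
  simp [Q, ← Real.ball_eq_Ioo, Real.dist_eq]

theorem Q_zero_zero_one (m : ℕ) : Q (0 : Spc m) 0 1 = ball 0 1 ×ˢ Ioo (-1) 1 := by
  simp [Q_eq_ball_prod_Ioo]

variable {n : ℕ}

theorem parBdryQ1_eq_parabolicBoundary : parBdryQ1 n = parabolicBoundary (ball 0 1) (-1) 1 := by
  rw [parabolicBoundary, frontier_ball _ one_ne_zero]
  rfl

theorem norm_fst_le_one_of_mem_parBdryQ1 {p : SpT (n + 1)} (hp : p ∈ parBdryQ1 n) :
    ‖p.1‖ ≤ 1 := by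
  rw [← dist_zero_right]
  exact hp.elim (fun h => h.1.le) fun h => h.1.le

theorem IsSubcaloricOn.le_of_heatOp_nonpos_Q_one {U v : SpT (n + 1) → ℝ}
    (hU : IsSubcaloricOn U (Q 0 0 1)) (hUc : ContinuousOn U (closure (Q 0 0 1)))
    (hv : ContDiff ℝ 2 v) (hheat : ∀ q ∈ Q 0 0 1, heatOp v q ≤ 0)
    (hbdry : ∀ q ∈ parBdryQ1 n, U q ≤ v q) {p : SpT (n + 1)} (hp : p ∈ Q 0 0 1) : U p ≤ v p := by
  rw [Q_zero_zero_one] at hU hUc hheat hp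
  rw [parBdryQ1_eq_parabolicBoundary] at hbdry
  exact hU.le_of_heatOp_nonpos isOpen_ball isBounded_ball hUc hv.continuous.continuousOn
    (fun _ _ => hv.contDiffAt) hheat hbdry hp

end UnitCylinder

/-- subcaloric comparison step of the flatness improvement lemma:
there is `c₁ ∈ (0,1)` depending only on the dimension such that for every
`σ ∈ (0,1/4]` and `τ > 0`, every continuous function `U` on the closure of `Q₁` which
is subcaloric in `Q₁` and satisfies `U ≤ τ` on `∂'Q₁` and `U ≤ 0` on
`∂'Q₁ ∩ {x_n > σ}` satisfies `U ≤ (1-c₁)τ` in `Q_{1/2}`. -/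
theorem statement13 (n : ℕ) :
    ∃ c₁ : ℝ, 0 < c₁ ∧ c₁ < 1 ∧
      ∀ σ τ : ℝ, 0 < σ → σ ≤ 1 / 4 → 0 < τ →
      ∀ U : SpT (n+1) → ℝ,
        ContinuousOn U (closure (Q (0 : Spc (n+1)) 0 1)) →
        (∀ φ : SpT (n+1) → ℝ, ContDiff ℝ (⊤ : ℕ∞) φ → HasCompactSupport φ →
          tsupport φ ⊆ Q (0 : Spc (n+1)) 0 1 → (∀ p, 0 ≤ φ p) →
          0 ≤ ∫ p in Q (0 : Spc (n+1)) 0 1, U p * (sLap φ p + tDeriv φ p)) →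
        (∀ p ∈ parBdryQ1 n, U p ≤ τ) →
        (∀ p ∈ parBdryQ1 n, σ < p.1 (Fin.last n) → U p ≤ 0) →
        ∀ p ∈ Q (0 : Spc (n+1)) 0 (1 / 2), U p ≤ (1 - c₁) * τ := by
  obtain ⟨c, hc0, hc1, hc⟩ := exists_pos_le_barrier n
  refine ⟨c, hc0, hc1, fun σ τ _ hσ hτ U hUc hU hUτ hU0 p hp => ?_⟩
  let v : SpT (n + 1) → ℝ := fun q => τ + -τ * barrier n q
  have hv : ContDiff ℝ 2 v := contDiff_const.add (contDiff_const.mul contDiff_barrier)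
  have hheat : ∀ q ∈ Q 0 0 1, heatOp v q ≤ 0 := fun q hq => by
    have hq' : 0 ≤ heatOp (barrier n) q :=
      heatOp_barrier_nonneg (by rw [Q_zero_zero_one] at hq; exact hq.2.1.le)
    rw [heatOp_add_const_mul contDiffAt_const contDiff_barrier.contDiffAt, heatOp_const, zero_add]
    exact mul_nonpos_of_nonpos_of_nonneg (neg_nonpos.2 hτ.le) hq'
  have hbdry : ∀ q ∈ parBdryQ1 n, U q ≤ v q := fun q hq => by
    rcases le_or_gt (q.1 (Fin.last n)) (1 / 4) with hlast | hlast
    · have hb := mul_nonneg hτ.le (neg_nonneg.2 (barrier_nonpos_of_mem_parBdryQ1 hq hlast))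
      linarith [hUτ q hq]
    · have hb := mul_le_mul_of_nonneg_left
        (barrier_le_one (norm_fst_le_one_of_mem_parBdryQ1 hq)) hτ.le
      linarith [hU0 q hq (hσ.trans_lt hlast)]
  have hpQ : p ∈ Q (0 : Spc (n + 1)) 0 1 :=
    ⟨hp.1.trans (by norm_num), hp.2.trans (by norm_num)⟩
  calc U p ≤ τ + -τ * barrier n p :=
        IsSubcaloricOn.le_of_heatOp_nonpos_Q_one hU hUc hv hheat hbdry hpQ
    _ ≤ (1 - c) * τ := by linarith [mul_le_mul_of_nonneg_left (hc p hp) hτ.le]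

end ParabolicBernoulli
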